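/- There exist universal constants c, C, C′ > 0 with the following property. Let N ≥ n ≥ 4 be integers, r ≥ √n, and ρ ∈ (0, 1/3), and let θ₁, …, θ_N be independent random vectors uniformly distributed on S^{n−1}. Then for every η ∈ (1+ρ)B₂ⁿ \ (1−2ρ)B₂ⁿ, every t ∈ ℝ and every β > 0, there exists q ≥ 1 − C′(ρ + n/r²) such that P( F(η, t) > β + (1 + c(ρ + (log n)²/n + n/r²)) · (√n/r) · φ(q·t·√n/r) ) ≤ e^{−Cβ²N}. -/

import Mathlib

open MeasureTheory Metric Set
open scoped RealInnerProductSpace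

/-- The uniform (rotation-invariant) probability measure on the unit sphere of `ℝⁿ`. -/
noncomputable def uniformSphere (n : ℕ) :
    Measure (sphere (0 : EuclideanSpace ℝ (Fin n)) 1) :=
  (((volume : Measure (EuclideanSpace ℝ (Fin n))).toSphere) Set.univ)⁻¹ •
    (volume : Measure (EuclideanSpace ℝ (Fin n))).toSphere

/-- `φ(r) = e^{−r²/2}`. -/
noncomputable def gphi (r : ℝ) : ℝ := Real.exp (-r ^ 2 / 2)

/-- `F(η,t) = (1/N) ∑_{k=1}^N φ(r⟨η,θ_k⟩ + t)`. -/
noncomputable def Ffun {n N : ℕ} (r t : ℝ)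
    (θ : Fin N → sphere (0 : EuclideanSpace ℝ (Fin n)) 1)
    (η : EuclideanSpace ℝ (Fin n)) : ℝ :=
  (1 / (N : ℝ)) * ∑ k : Fin N, gphi (r * ⟪η, (θ k : EuclideanSpace ℝ (Fin n))⟫ + t)

/-- The joint law of `N` independent uniform random points on `S^{n-1}`. -/
noncomputable def sphereProduct (n N : ℕ) :
    Measure (Fin N → sphere (0 : EuclideanSpace ℝ (Fin n)) 1) :=
  Measure.pi fun _ => uniformSphere n

/-!
By Hoeffding's inequality `F(η, t)` exceeds its mean by `β` with probability at most `e^{−2β²N}`,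
so everything rests on an upper bound for the mean of `φ(r⟨η, θ⟩ + t)`. For a unit vector `e`, the
angle `α` between `e` and a uniform `θ` has density `sin^{n−2} α / W` on `(0, π)`, where
`W = ∫ sin^{n−2} ≥ √(2π/n)` by Wallis' product. Since
`sin^{n−3} α ≤ e^{9/(2n)} e^{−n cos² α / 2}`, the law of `⟨e, θ⟩` is dominated, as a measure, by
`e^{9/(2n)}` times the Gaussian law `N(0, 1/n)`. Against that Gaussian the mean is explicit: it is
`q (√n/r) φ(q t √n/r)` with `q = (‖η‖² + n/r²)^{−1/2}`.
-/

section

open Real ProbabilityTheory Module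
open scoped ENNReal NNReal

/-! ### Polar coordinates and the law of a coordinate on the sphere -/

section PolarCoordinates

variable {E : Type*} [NormedAddCommGroup E] [NormedSpace ℝ E] [MeasurableSpace E] [BorelSpace E]
  [FiniteDimensional ℝ E] [Nontrivial E] (μ : Measure E) [μ.IsAddHaarMeasure]

theorem lintegral_eq_lintegral_toSphere {f : E → ℝ≥0∞} (hf : Measurable f) :
    ∫⁻ x, f x ∂μ = ∫⁻ θ : sphere (0 : E) 1, ∫⁻ p in Ioi (0 : ℝ),
      .ofReal (p ^ (finrank ℝ E - 1)) * f (p • (θ : E)) ∂volume ∂μ.toSphere := by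
  have polar_comp (x : ({0}ᶜ : Set E)) : f x =
      f ((homeomorphUnitSphereProd E x).2.1 • (homeomorphUnitSphereProd E x).1.1) := by
    rw [← homeomorphUnitSphereProd_symm_apply_coe, Homeomorph.symm_apply_apply]
  calc
    ∫⁻ x, f x ∂μ = ∫⁻ x : ({0}ᶜ : Set E), f x ∂(μ.comap (↑)) := by
      rw [lintegral_subtype_comap (measurableSet_singleton _).compl, restrict_compl_singleton]
    _ = ∫⁻ x, f (x.2.1 • x.1.1) ∂μ.toSphere.prod (.volumeIoiPow (finrank ℝ E - 1)) := by
      simp_rw [polar_comp]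
      exact μ.measurePreserving_homeomorphUnitSphereProd.lintegral_comp_emb
        (Homeomorph.measurableEmbedding _) (fun x ↦ f (x.2.1 • x.1.1))
    _ = ∫⁻ θ : sphere (0 : E) 1, ∫⁻ p, f (p.1 • θ.1) ∂.volumeIoiPow (finrank ℝ E - 1)
          ∂μ.toSphere := lintegral_prod _ (by fun_prop)
    _ = _ := by
      refine lintegral_congr fun θ ↦ ?_
      rw [Measure.volumeIoiPow,
        lintegral_withDensity_eq_lintegral_mul _ (by fun_prop) (by fun_prop),
        ← lintegral_subtype_comap measurableSet_Ioi]
      rfl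

theorem lintegral_fun_norm_eq_toSphere_univ_mul {f : ℝ → ℝ≥0∞} (hf : Measurable f) :
    ∫⁻ x, f ‖x‖ ∂μ =
      μ.toSphere univ * ∫⁻ p in Ioi (0 : ℝ), .ofReal (p ^ (finrank ℝ E - 1)) * f p := by
  have norm_smul_sphere (θ : sphere (0 : E) 1) {p : ℝ} (hp : p ∈ Ioi 0) : ‖p • (θ : E)‖ = p := by
    simp [norm_smul, abs_of_pos hp.out]
  calc
    ∫⁻ x, f ‖x‖ ∂μ = ∫⁻ _ : sphere (0 : E) 1, ∫⁻ p in Ioi (0 : ℝ),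
        .ofReal (p ^ (finrank ℝ E - 1)) * f p ∂volume ∂μ.toSphere := by
      rw [lintegral_eq_lintegral_toSphere μ (by fun_prop)]
      refine lintegral_congr fun θ ↦ setLIntegral_congr_fun measurableSet_Ioi fun p hp ↦ ?_
      simp only [norm_smul_sphere θ hp]
    _ = _ := by rw [lintegral_const, mul_comm]

end PolarCoordinates

theorem lintegral_upper_half_plane_eq_polar {f : ℝ × ℝ → ℝ≥0∞} (hf : Measurable f) :
    ∫⁻ x : ℝ, ∫⁻ y in Ioi (0 : ℝ), f (x, y) =
      ∫⁻ p in Ioi (0 : ℝ), ∫⁻ α in Ioo 0 π, .ofReal p * f (p * cos α, p * sin α) := by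
  have hS : MeasurableSet ((univ : Set ℝ) ×ˢ Ioi (0 : ℝ)) := .prod .univ measurableSet_Ioi
  have mem_iff {q : ℝ × ℝ} (hq : q ∈ polarCoord.target) :
      polarCoord.symm q ∈ univ ×ˢ Ioi 0 ↔ q ∈ Ioi 0 ×ˢ Ioo 0 π := by
    simp only [polarCoord_target, mem_prod, mem_Ioi, mem_Ioo] at hq
    simp only [polarCoord_symm_apply, mem_prod, mem_univ, true_and, mem_Ioi, mem_Ioo, hq.1, hq.2.2,
      and_true, mul_pos_iff_of_pos_left]
    refine ⟨fun h ↦ ?_, fun h ↦ sin_pos_of_pos_of_lt_pi h hq.2.2⟩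
    contrapose! h
    exact sin_nonpos_of_nonpos_of_neg_pi_le h hq.2.1.le
  calc
    _ = ∫⁻ q in univ ×ˢ Ioi 0, f q := by
      rw [Measure.volume_eq_prod, ← Measure.prod_restrict, lintegral_prod _ hf.aemeasurable,
        Measure.restrict_univ]
    _ = ∫⁻ q in polarCoord.target,
          (Ioi 0 ×ˢ Ioo 0 π).indicator (fun q ↦ .ofReal q.1 * f (polarCoord.symm q)) q := by
      rw [← lintegral_indicator hS, ← lintegral_comp_polarCoord_symm]
      refine setLIntegral_congr_fun polarCoord.open_target.measurableSet fun q hq ↦ ?_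
      simp only [indicator, mem_iff hq, smul_eq_mul, mul_ite, mul_zero]
    _ = ∫⁻ q in Ioi 0 ×ˢ Ioo 0 π, .ofReal q.1 * f (polarCoord.symm q) := by
      rw [setLIntegral_indicator (measurableSet_Ioi.prod measurableSet_Ioo), inter_eq_left.2]
      exact prod_mono_right (Ioo_subset_Ioo_left (by linarith [pi_pos]))
    _ = _ := by
      rw [Measure.volume_eq_prod, ← Measure.prod_restrict, lintegral_prod _ (by fun_prop)]
      rfl

theorem exists_radial_weight (k : ℕ) : ∃ w : ℝ → ℝ≥0∞, Measurable w ∧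
    ∀ a : ℝ≥0∞, ∫⁻ p in Ioi (0 : ℝ), .ofReal (p ^ k) * (a * w p) = a := by
  refine ⟨(Ioo 0 1).indicator fun p ↦ (.ofReal (p ^ k))⁻¹,
    .indicator (by fun_prop) measurableSet_Ioo, fun a ↦ ?_⟩
  calc
    _ = ∫⁻ p in Ioi (0 : ℝ), (Ioo 0 1).indicator (fun _ ↦ a) p := by
      refine setLIntegral_congr_fun measurableSet_Ioi fun p (hp : 0 < p) ↦ ?_
      by_cases hp1 : p ∈ Ioo 0 1
      · simp only [indicator_of_mem hp1]
        rw [mul_left_comm, ENNReal.mul_inv_cancel (by simpa using by positivity) (by simp),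
          mul_one]
      · simp [indicator_of_notMem hp1]
    _ = a := by
      rw [setLIntegral_indicator measurableSet_Ioo, inter_eq_left.2 Ioo_subset_Ioi_self]
      simp

theorem finrank_orthogonal_of_norm_eq_one {E : Type*} [NormedAddCommGroup E]
    [InnerProductSpace ℝ E] {d : ℕ} (hd : finrank ℝ E = d + 1) {e : E}
    (he : ‖e‖ = 1) : finrank ℝ (ℝ ∙ e)ᗮ = d :=
  have : Fact (finrank ℝ E = d + 1) := ⟨hd⟩
  Submodule.finrank_orthogonal_span_singleton (by simp [← norm_ne_zero_iff, he])

section InnerProductSpace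

variable {E : Type*} [NormedAddCommGroup E] [InnerProductSpace ℝ E] [FiniteDimensional ℝ E]
  [MeasurableSpace E] [BorelSpace E] {e : E}

theorem lintegral_eq_lintegral_orthogonal_span_singleton (he : ‖e‖ = 1) {f : E → ℝ≥0∞}
    (hf : Measurable f) : ∫⁻ x, f x = ∫⁻ s : ℝ, ∫⁻ y : (ℝ ∙ e)ᗮ, f (s • e + y) := by
  let Φ := (LinearIsometryEquiv.withLpProdCongr 2 (LinearIsometryEquiv.toSpanUnitSingleton e he)
    (.refl ℝ (ℝ ∙ e)ᗮ)).trans (ℝ ∙ e).orthogonalDecomposition.symm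
  have Φ_apply (q : ℝ × (ℝ ∙ e)ᗮ) : Φ (.toLp 2 q) = q.1 • e + q.2 := by
    simp [Φ]
  have hΦ : MeasurePreserving (Φ ∘ WithLp.toLp 2) :=
    Φ.measurePreserving.comp (WithLp.volume_preserving_toLp ℝ (ℝ ∙ e)ᗮ)
  rw [← hΦ.lintegral_comp hf, Measure.volume_eq_prod,
    lintegral_prod (fun q ↦ f ((Φ ∘ WithLp.toLp 2) q)) (hf.comp hΦ.measurable).aemeasurable]
  simp only [Function.comp_apply, Φ_apply]

theorem lintegral_inner_norm_eq_polar {d : ℕ} (hd : finrank ℝ E = d + 2) (he : ‖e‖ = 1)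
    {H : ℝ × ℝ → ℝ≥0∞} (hH : Measurable H) :
    ∫⁻ x : E, H (⟪e, x⟫, ‖x‖) = (volume : Measure (ℝ ∙ e)ᗮ).toSphere univ *
      ∫⁻ p in Ioi (0 : ℝ), ∫⁻ α in Ioo 0 π,
        .ofReal (p ^ (d + 1)) * (.ofReal (sin α ^ d) * H (p * cos α, p)) := by
  have finrank_orthogonal := finrank_orthogonal_of_norm_eq_one hd he
  have : Nontrivial (ℝ ∙ e)ᗮ := nontrivial_of_finrank_pos (R := ℝ) (by lia)
  have inner_orthogonal (y : (ℝ ∙ e)ᗮ) : ⟪e, (y : E)⟫ = 0 :=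
    Submodule.mem_orthogonal_singleton_iff_inner_right.1 y.2
  have inner_add (s : ℝ) (y : (ℝ ∙ e)ᗮ) : ⟪e, s • e + y⟫ = s := by
    simp [inner_add_right, inner_smul_right, inner_orthogonal, he]
  have norm_add (s : ℝ) (y : (ℝ ∙ e)ᗮ) : ‖s • e + y‖ = √(s ^ 2 + ‖y‖ ^ 2) := by
    refine (sqrt_eq_iff_mul_self_eq (by positivity) (norm_nonneg _)).2 ?_ |>.symm
    rw [norm_add_mul_self_real]
    simp [inner_smul_left, inner_orthogonal, norm_smul, he, sq]
  calc
    _ = ∫⁻ s : ℝ, ∫⁻ y : (ℝ ∙ e)ᗮ, H (s, √(s ^ 2 + ‖y‖ ^ 2)) := by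
      rw [lintegral_eq_lintegral_orthogonal_span_singleton he (by fun_prop)]
      simp only [inner_add, norm_add]
    _ = (volume : Measure (ℝ ∙ e)ᗮ).toSphere univ *
          ∫⁻ s : ℝ, ∫⁻ y in Ioi (0 : ℝ), .ofReal (y ^ d) * H (s, √(s ^ 2 + y ^ 2)) := by
      rw [← lintegral_const_mul' _ _ (measure_ne_top _ _)]
      refine lintegral_congr fun s ↦ ?_
      rw [lintegral_fun_norm_eq_toSphere_univ_mul _ (f := fun y ↦ H (s, √(s ^ 2 + y ^ 2)))
        (by fun_prop), finrank_orthogonal, Nat.add_sub_cancel]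
    _ = _ := by
      rw [lintegral_upper_half_plane_eq_polar
        (f := fun q ↦ .ofReal (q.2 ^ d) * H (q.1, √(q.1 ^ 2 + q.2 ^ 2))) (by fun_prop)]
      congr 1
      refine setLIntegral_congr_fun measurableSet_Ioi fun p (hp : 0 < p) ↦
        lintegral_congr fun α ↦ ?_
      have radius : √((p * cos α) ^ 2 + (p * sin α) ^ 2) = p := by
        rw [mul_pow, mul_pow, ← mul_add, cos_sq_add_sin_sq, mul_one, sqrt_sq hp.le]
      simp only [radius]
      rw [mul_pow, pow_succ', ENNReal.ofReal_mul hp.le, ENNReal.ofReal_mul (by positivity)]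
      ring

theorem lintegral_toSphere_inner {d : ℕ} (hd : finrank ℝ E = d + 2) (he : ‖e‖ = 1)
    {g : ℝ → ℝ≥0∞} (hg : Measurable g) :
    ∫⁻ θ : sphere (0 : E) 1, g ⟪e, (θ : E)⟫ ∂(volume : Measure E).toSphere =
      (volume : Measure (ℝ ∙ e)ᗮ).toSphere univ *
        ∫⁻ α in Ioo 0 π, .ofReal (sin α ^ d) * g (cos α) := by
  have : Nontrivial E := nontrivial_of_finrank_pos (R := ℝ) (by lia)
  obtain ⟨w, hw, lintegral_weight⟩ := exists_radial_weight (d + 1)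
  calc
    _ = ∫⁻ θ : sphere (0 : E) 1, ∫⁻ p in Ioi (0 : ℝ), .ofReal (p ^ (finrank ℝ E - 1)) *
          (g (⟪e, p • (θ : E)⟫ / ‖p • (θ : E)‖) * w ‖p • (θ : E)‖)
          ∂volume ∂(volume : Measure E).toSphere := by
      refine lintegral_congr fun θ ↦ ?_
      rw [← lintegral_weight (g ⟪e, (θ : E)⟫)]
      refine setLIntegral_congr_fun measurableSet_Ioi fun p (hp : 0 < p) ↦ ?_
      simp [norm_smul, abs_of_pos hp, inner_smul_right, hd, mul_div_cancel_left₀ _ hp.ne']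
    _ = ∫⁻ x : E, g (⟪e, x⟫ / ‖x‖) * w ‖x‖ := by
      rw [lintegral_eq_lintegral_toSphere (volume : Measure E) (by fun_prop)]
    _ = (volume : Measure (ℝ ∙ e)ᗮ).toSphere univ * ∫⁻ p in Ioi (0 : ℝ), .ofReal (p ^ (d + 1)) *
          ((∫⁻ α in Ioo 0 π, .ofReal (sin α ^ d) * g (cos α)) * w p) := by
      rw [lintegral_inner_norm_eq_polar hd he (H := fun q ↦ g (q.1 / q.2) * w q.2) (by fun_prop)]
      congr 1
      refine setLIntegral_congr_fun measurableSet_Ioi fun p (hp : 0 < p) ↦ ?_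
      simp only [mul_div_cancel_left₀ _ hp.ne', ← mul_assoc (ENNReal.ofReal (sin _ ^ d))]
      rw [lintegral_const_mul _ (by fun_prop), lintegral_mul_const _ (by fun_prop)]
    _ = _ := by rw [lintegral_weight]

theorem laverage_toSphere_inner {d : ℕ} (hd : finrank ℝ E = d + 2) (he : ‖e‖ = 1)
    {g : ℝ → ℝ≥0∞} (hg : Measurable g) :
    ⨍⁻ θ : sphere (0 : E) 1, g ⟪e, (θ : E)⟫ ∂(volume : Measure E).toSphere =
      (∫⁻ α in Ioo 0 π, .ofReal (sin α ^ d) * g (cos α)) /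
        .ofReal (∫ α in (0 : ℝ)..π, sin α ^ d) := by
  have finrank_orthogonal := finrank_orthogonal_of_norm_eq_one hd he
  have : Nontrivial (ℝ ∙ e)ᗮ := nontrivial_of_finrank_pos (R := ℝ) (by lia)
  have toSphere_univ : (volume : Measure E).toSphere univ =
      (volume : Measure (ℝ ∙ e)ᗮ).toSphere univ * .ofReal (∫ α in (0 : ℝ)..π, sin α ^ d) := by
    rw [intervalIntegral.integral_of_le pi_pos.le, integral_Ioc_eq_integral_Ioo,
      ofReal_integral_eq_lintegral_ofReal]
    · simpa using lintegral_toSphere_inner hd he (g := 1) measurable_one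
    · exact (Continuous.integrableOn_Icc (by fun_prop)).mono_set Ioo_subset_Icc_self
    · exact (ae_restrict_mem measurableSet_Ioo).mono fun α hα ↦
        pow_nonneg (sin_nonneg_of_mem_Icc (Ioo_subset_Icc_self hα)) d
  rw [laverage_eq, lintegral_toSphere_inner hd he hg, toSphere_univ]
  exact ENNReal.mul_div_mul_left _ _
    (Measure.measure_univ_ne_zero.2 (Measure.toSphere_ne_zero _)) (measure_ne_top _ _)

end InnerProductSpace

/-! ### Comparison with the Gaussian measure -/

theorem integral_sin_pow_mul_integral_sin_pow_succ (d : ℕ) :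
    (d + 1) * (∫ x in (0 : ℝ)..π, sin x ^ d) * ∫ x in (0 : ℝ)..π, sin x ^ (d + 1) = 2 * π := by
  induction d with
  | zero => simp [one_add_one_eq_two, mul_comm]
  | succ d ih =>
    rw [integral_sin_pow d]
    simp only [sin_zero, sin_pi, zero_pow d.succ_ne_zero, zero_mul, sub_zero, zero_div, zero_add]
    push_cast at ih ⊢
    rw [← ih]
    field_simp
    ring

theorem sqrt_two_pi_div_le_integral_sin_pow (d : ℕ) :
    √(2 * π / (d + 1)) ≤ ∫ x in (0 : ℝ)..π, sin x ^ d := by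
  refine sqrt_le_iff.2 ⟨(integral_sin_pow_pos d).le, (div_le_iff₀ (by positivity)).2 ?_⟩
  calc
    2 * π = (d + 1) * (∫ x in (0 : ℝ)..π, sin x ^ d) * ∫ x in (0 : ℝ)..π, sin x ^ (d + 1) :=
      (integral_sin_pow_mul_integral_sin_pow_succ d).symm
    _ ≤ (d + 1) * (∫ x in (0 : ℝ)..π, sin x ^ d) * ∫ x in (0 : ℝ)..π, sin x ^ d := by
      gcongr
      · exact mul_nonneg (by positivity) (integral_sin_pow_pos d).le
      · exact integral_sin_pow_succ_le d
    _ = (∫ x in (0 : ℝ)..π, sin x ^ d) ^ 2 * (d + 1) := by ring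

theorem one_sub_pow_le_exp {z a : ℝ} (hz : z ≤ 1) (ha : 0 ≤ a) (k : ℕ) :
    (1 - z) ^ k ≤ exp (a ^ 2 / (k + a) - (k + a) * z) := by
  rcases k.eq_zero_or_pos with rfl | hk
  · rw [pow_zero, one_le_exp_iff]
    rcases ha.eq_or_lt with rfl | ha
    · simp
    · have : a ^ 2 / a = a := by field_simp
      simp only [Nat.cast_zero, zero_add, this]
      nlinarith
  -- The tangent line of `log` at `k / (k + a)` has slope `(k + a) / k`, hence the exponent `k + a`.
  calc
    (1 - z) ^ k = (((1 - z) / (k / (k + a))) * (k / (k + a))) ^ k := by field_simp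
    _ ≤ (exp ((1 - z) / (k / (k + a)) - 1) * exp (k / (k + a) - 1)) ^ k := by
      have : 0 ≤ 1 - z := sub_nonneg.2 hz
      gcongr
      · linarith [add_one_le_exp ((1 - z) / (k / (k + a)) - 1)]
      · linarith [add_one_le_exp ((k : ℝ) / (k + a) - 1)]
    _ = exp (a ^ 2 / (k + a) - (k + a) * z) := by
      rw [← exp_add, ← exp_nat_mul]
      congr 1
      field_simp
      ring

theorem sin_pow_le_exp {x a : ℝ} (hx : 0 ≤ sin x) (ha : 0 ≤ a) (k : ℕ) :
    sin x ^ k ≤ exp ((a ^ 2 / (k + a) - (k + a) * cos x ^ 2) / 2) := by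
  refine (pow_le_pow_iff_left₀ (by positivity) (exp_nonneg _) two_ne_zero).1 ?_
  calc
    (sin x ^ k) ^ 2 = (1 - cos x ^ 2) ^ k := by rw [← sin_sq, ← pow_mul, ← pow_mul, mul_comm]
    _ ≤ exp (a ^ 2 / (k + a) - (k + a) * cos x ^ 2) := one_sub_pow_le_exp (cos_sq_le_one x) ha k
    _ = exp ((a ^ 2 / (k + a) - (k + a) * cos x ^ 2) / 2) ^ 2 := by
      rw [← exp_nat_mul]
      congr 1
      push_cast
      ring

theorem sin_pow_succ_div_integral_le {x : ℝ} (hx : 0 ≤ sin x) (k : ℕ) :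
    sin x ^ (k + 1) / (∫ x in (0 : ℝ)..π, sin x ^ (k + 1)) ≤
      exp (9 / (2 * (k + 3))) * (sin x * gaussianPDFReal 0 (k + 3)⁻¹ (cos x)) := by
  have sin_pow_le : sin x ^ k ≤
      exp (9 / (2 * (k + 3))) * exp (-cos x ^ 2 / (2 * ((k : ℝ) + 3)⁻¹)) := by
    refine (sin_pow_le_exp hx zero_le_three k).trans_eq ?_
    rw [← exp_add]
    congr 1
    field_simp
    ring
  have integral_ge : √(2 * π * ((k : ℝ) + 3)⁻¹) ≤ ∫ x in (0 : ℝ)..π, sin x ^ (k + 1) := by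
    refine le_trans ?_ (sqrt_two_pi_div_le_integral_sin_pow (k + 1))
    rw [← div_eq_mul_inv]
    push_cast
    gcongr √(2 * π / ?_)
    linarith
  rw [gaussianPDFReal, pow_succ]
  push_cast
  calc
    sin x ^ k * sin x / (∫ x in (0 : ℝ)..π, sin x ^ (k + 1)) ≤
        exp (9 / (2 * (k + 3))) * exp (-cos x ^ 2 / (2 * ((k : ℝ) + 3)⁻¹)) * sin x /
          √(2 * π * ((k : ℝ) + 3)⁻¹) := by gcongr
    _ = _ := by
      rw [sub_zero]
      ring

theorem setLIntegral_sin_mul_comp_cos (G : ℝ → ℝ≥0∞) :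
    ∫⁻ α in Ioo 0 π, .ofReal (sin α) * G (cos α) = ∫⁻ u in Ioo (-1) 1, G u := by
  have image_cos : cos '' Ioo 0 π = Ioo (-1) 1 := Real.cosPartialHomeomorph.image_source_eq_target
  rw [← image_cos, lintegral_image_eq_lintegral_abs_deriv_mul measurableSet_Ioo
    (fun x _ ↦ (hasDerivAt_cos x).hasDerivWithinAt) (injOn_cos.mono Ioo_subset_Icc_self)]
  refine setLIntegral_congr_fun measurableSet_Ioo fun x hx ↦ ?_
  simp only [abs_neg, abs_of_pos (sin_pos_of_mem_Ioo hx)]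

theorem laverage_toSphere_inner_le_gaussianReal {E : Type*} [NormedAddCommGroup E]
    [InnerProductSpace ℝ E] [FiniteDimensional ℝ E] [MeasurableSpace E] [BorelSpace E] {e : E}
    {k : ℕ} (hk : finrank ℝ E = k + 3) (he : ‖e‖ = 1) {g : ℝ → ℝ≥0∞} (hg : Measurable g) :
    ⨍⁻ θ : sphere (0 : E) 1, g ⟪e, (θ : E)⟫ ∂(volume : Measure E).toSphere ≤
      .ofReal (exp (9 / (2 * (k + 3)))) * ∫⁻ u, g u ∂gaussianReal 0 (k + 3)⁻¹ := by
  have density_le {α : ℝ} (hα : α ∈ Ioo 0 π) :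
      .ofReal (sin α ^ (k + 1)) / .ofReal (∫ x in (0 : ℝ)..π, sin x ^ (k + 1)) ≤
        .ofReal (exp (9 / (2 * (k + 3)))) *
          (.ofReal (sin α) * gaussianPDF 0 (k + 3)⁻¹ (cos α)) := by
    have sin_nonneg : 0 ≤ sin α := (sin_pos_of_mem_Ioo hα).le
    rw [← ENNReal.ofReal_div_of_pos (integral_sin_pow_pos _), gaussianPDF,
      ← ENNReal.ofReal_mul sin_nonneg, ← ENNReal.ofReal_mul (exp_nonneg _)]
    exact ENNReal.ofReal_le_ofReal (sin_pow_succ_div_integral_le sin_nonneg k)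
  calc
    _ = ∫⁻ α in Ioo 0 π,
          .ofReal (sin α ^ (k + 1)) / .ofReal (∫ x in (0 : ℝ)..π, sin x ^ (k + 1)) * g (cos α) := by
      rw [laverage_toSphere_inner hk he hg]
      simp_rw [div_eq_mul_inv, mul_right_comm _ _ (g _)]
      rw [lintegral_mul_const _ (by fun_prop)]
    _ ≤ ∫⁻ α in Ioo 0 π, .ofReal (exp (9 / (2 * (k + 3)))) *
          (.ofReal (sin α) * (gaussianPDF 0 (k + 3)⁻¹ (cos α) * g (cos α))) := by
      refine setLIntegral_mono' measurableSet_Ioo fun α hα ↦ ?_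
      rw [← mul_assoc (ENNReal.ofReal (sin α)), ← mul_assoc]
      gcongr
      exact density_le hα
    _ = .ofReal (exp (9 / (2 * (k + 3)))) *
          ∫⁻ u in Ioo (-1) 1, gaussianPDF 0 (k + 3)⁻¹ u * g u := by
      rw [lintegral_const_mul _ (by fun_prop), setLIntegral_sin_mul_comp_cos
        (fun u ↦ gaussianPDF 0 (k + 3)⁻¹ u * g u)]
    _ ≤ .ofReal (exp (9 / (2 * (k + 3)))) * ∫⁻ u, gaussianPDF 0 (k + 3)⁻¹ u * g u := by
      gcongr 1
      exact setLIntegral_le_lintegral _ _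
    _ = _ := by
      rw [gaussianReal_of_var_ne_zero _ (by positivity),
        lintegral_withDensity_eq_lintegral_mul _ (by fun_prop) hg]
      rfl

instance isProbabilityMeasure_uniformSphere (n : ℕ) [NeZero n] :
    IsProbabilityMeasure (uniformSphere n) :=
  have : NeZero (volume : Measure (EuclideanSpace ℝ (Fin n))).toSphere :=
    ⟨Measure.toSphere_ne_zero _⟩
  isProbabilityMeasureSMul

theorem map_inner_uniformSphere_le_gaussianReal {n : ℕ} (hn : 3 ≤ n) {e : EuclideanSpace ℝ (Fin n)}
    (he : ‖e‖ = 1) :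
    (uniformSphere n).map (fun θ : sphere _ 1 ↦ ⟪e, (θ : EuclideanSpace ℝ (Fin n))⟫) ≤
      ENNReal.ofReal (exp (9 / (2 * n))) • gaussianReal 0 (n : ℝ≥0)⁻¹ := by
  obtain ⟨k, rfl⟩ := Nat.exists_eq_add_of_le' hn
  refine Measure.le_iff.2 fun s hs ↦ ?_
  have hind : Measurable (s.indicator (1 : ℝ → ℝ≥0∞)) := measurable_one.indicator hs
  rw [← lintegral_indicator_one hs, lintegral_map hind (by fun_prop), Measure.smul_apply,
    smul_eq_mul, ← lintegral_indicator_one hs]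
  exact_mod_cast laverage_toSphere_inner_le_gaussianReal finrank_euclideanSpace_fin he hind

/-! ### The mean of `φ(r⟨η, θ⟩ + t)` -/

@[fun_prop]
theorem continuous_gphi : Continuous gphi := by
  unfold gphi
  fun_prop

theorem gphi_nonneg (x : ℝ) : 0 ≤ gphi x := exp_nonneg _

theorem gphi_le_one (x : ℝ) : gphi x ≤ 1 := exp_le_one_iff.2 (by linarith [sq_nonneg x])

theorem integral_gphi_gaussianReal (μ : ℝ) (v : ℝ≥0) :
    ∫ x, gphi x ∂gaussianReal μ v = (√(1 + v))⁻¹ * gphi (μ / √(1 + v)) := by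
  rcases eq_or_ne v 0 with rfl | hv
  · simp
  have : (0 : ℝ) < v := by exact_mod_cast pos_iff_ne_zero.2 hv
  have complete_square (x : ℝ) : gaussianPDFReal μ v x • gphi x =
      (√(2 * π * v))⁻¹ * gphi (μ / √(1 + v)) *
        exp (-((1 + v) / (2 * v)) * (x - μ / (1 + v)) ^ 2) := by
    rw [gaussianPDFReal, gphi, gphi, smul_eq_mul, mul_assoc _ (exp _),
      mul_assoc _ (exp _), ← exp_add, ← exp_add, div_pow, sq_sqrt (by positivity)]
    congr 2
    field_simp
    ring
  simp_rw [integral_gaussianReal_eq_integral_smul hv, complete_square]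
  rw [integral_const_mul, integral_sub_right_eq_self (fun x ↦ exp (-((1 + v) / (2 * v)) * x ^ 2)),
    integral_gaussian, mul_right_comm, ← sqrt_inv, ← sqrt_inv, ← sqrt_mul (by positivity)]
  congr 2
  field_simp

theorem integral_gphi_mul_add_gaussianReal (μ : ℝ) (v : ℝ≥0) (a t : ℝ) :
    ∫ x, gphi (a * x + t) ∂gaussianReal μ v =
      (√(1 + a ^ 2 * v))⁻¹ * gphi ((a * μ + t) / √(1 + a ^ 2 * v)) := by
  have map_affine : (gaussianReal μ v).map (fun x ↦ a * x + t) =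
      gaussianReal (a * μ + t) (.mk (a ^ 2) (sq_nonneg a) * v) := by
    rw [← gaussianReal_map_add_const, ← gaussianReal_map_const_mul,
      Measure.map_map (by fun_prop) (by fun_prop)]
    rfl
  rw [← integral_map (f := gphi) (by fun_prop) (by fun_prop), map_affine,
    integral_gphi_gaussianReal]
  rfl

theorem integral_gphi_uniformSphere_le {n : ℕ} (hn : 3 ≤ n) (η : EuclideanSpace ℝ (Fin n))
    (r t : ℝ) :
    ∫ θ, gphi (r * ⟪η, (θ : EuclideanSpace ℝ (Fin n))⟫ + t) ∂uniformSphere n ≤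
      exp (9 / (2 * n)) * ((√(1 + (r * ‖η‖) ^ 2 / n))⁻¹ * gphi (t / √(1 + (r * ‖η‖) ^ 2 / n))) := by
  have : NeZero n := ⟨by lia⟩
  obtain ⟨e, he, hη⟩ : ∃ e : EuclideanSpace ℝ (Fin n), ‖e‖ = 1 ∧ η = ‖η‖ • e := by
    rcases eq_or_ne η 0 with rfl | hη
    · obtain ⟨e, he⟩ := exists_norm_eq (EuclideanSpace ℝ (Fin n)) zero_le_one
      exact ⟨e, he, by simp⟩
    · exact ⟨‖η‖⁻¹ • η, by simp [norm_smul, hη], by simp [hη]⟩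
  calc
    _ = ∫ u, gphi (r * ‖η‖ * u + t)
          ∂(uniformSphere n).map (fun θ : sphere _ 1 ↦ ⟪e, (θ : EuclideanSpace ℝ (Fin n))⟫) := by
      rw [integral_map (by fun_prop) (by fun_prop)]
      conv_lhs => rw [hη]
      simp only [inner_smul_left, conj_trivial, mul_assoc]
    _ ≤ ∫ u, gphi (r * ‖η‖ * u + t)
          ∂(ENNReal.ofReal (exp (9 / (2 * n))) • gaussianReal 0 (n : ℝ≥0)⁻¹) := by
      refine integral_mono_measure (map_inner_uniformSphere_le_gaussianReal hn he)
        (.of_forall fun u ↦ gphi_nonneg _) (.smul_measure ?_ ENNReal.ofReal_ne_top)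
      exact .of_bound (by fun_prop) 1
        (.of_forall fun u ↦ (abs_of_nonneg (gphi_nonneg _)).trans_le (gphi_le_one _))
    _ = _ := by
      rw [integral_smul_measure, integral_gphi_mul_add_gaussianReal]
      simp [exp_nonneg, div_eq_mul_inv]

theorem inv_sqrt_one_add_mul_sq_div {a r : ℝ} (ha : 0 < a) (hr : 0 < r) (s : ℝ) :
    (√(1 + (r * s) ^ 2 / a))⁻¹ = (√(s ^ 2 + a / r ^ 2))⁻¹ * (√a / r) := by
  have : 1 + (r * s) ^ 2 / a = (s ^ 2 + a / r ^ 2) * (r ^ 2 / a) := by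
    field_simp
    ring
  rw [this, sqrt_mul (by positivity), sqrt_div (by positivity), sqrt_sq hr.le, mul_inv, inv_div]

/-! ### Concentration -/

theorem measure_pi_add_integral_le_average_le {Ω ι : Type*} [MeasurableSpace Ω] (μ : Measure Ω)
    [IsProbabilityMeasure μ] [Fintype ι] [Nonempty ι] {f : Ω → ℝ} (hf : Measurable f) {a b : ℝ}
    (hab : ∀ x, f x ∈ Icc a b) {β : ℝ} (hβ : 0 ≤ β) :
    Measure.pi (fun _ : ι ↦ μ)
        {ω | β + ∫ x, f x ∂μ ≤ 1 / (Fintype.card ι : ℝ) * ∑ i, f (ω i)} ≤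
      .ofReal (exp (-(2 * β ^ 2 * Fintype.card ι / (b - a) ^ 2))) := by
  set P := Measure.pi fun _ : ι ↦ μ
  have hcard : (0 : ℝ) < Fintype.card ι := by exact_mod_cast Fintype.card_pos
  have indep : iIndepFun (fun i (ω : ι → Ω) ↦ f (ω i) - ∫ x, f x ∂μ) P :=
    iIndepFun_pi fun _ ↦ (hf.sub_const _).aemeasurable
  have mean (i : ι) : ∫ ω, f (ω i) ∂P = ∫ x, f x ∂μ :=
    integral_comp_eval hf.aestronglyMeasurable
  have subgaussian (i : ι) : HasSubgaussianMGF (fun ω ↦ f (ω i) - ∫ x, f x ∂μ)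
      ((‖b - a‖₊ / 2) ^ 2) P := by
    have h := hasSubgaussianMGF_of_mem_Icc (μ := P)
      (hf.comp (measurable_pi_apply i)).aemeasurable (.of_forall fun ω ↦ hab (ω i))
    simpa only [Function.comp_apply, mean i] using h
  rw [← ofReal_measureReal]
  refine ENNReal.ofReal_le_ofReal ?_
  calc
    _ ≤ P.real {ω | Fintype.card ι * β ≤ ∑ i, (f (ω i) - ∫ x, f x ∂μ)} := by
      refine measureReal_mono fun ω hω ↦ ?_
      rw [mem_ofPred_eq, one_div_mul_eq_div, le_div_iff₀ hcard] at hω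
      simp only [mem_ofPred_eq, Finset.sum_sub_distrib, Finset.sum_const, Finset.card_univ,
        nsmul_eq_mul]
      linarith
    _ ≤ _ := HasSubgaussianMGF.measure_sum_ge_le_of_iIndepFun indep (fun i _ ↦ subgaussian i)
      (by positivity)
    _ = _ := by
      congr 1
      simp only [div_pow, Finset.sum_const, Finset.card_univ, nsmul_eq_mul, NNReal.coe_mul,
        NNReal.coe_natCast, NNReal.coe_div, NNReal.coe_pow, coe_nnnorm, norm_eq_abs, sq_abs,
        NNReal.coe_ofNat]
      field_simp

theorem sphereProduct_Ffun_le {n N : ℕ} [NeZero n] [NeZero N] (r t : ℝ)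
    (η : EuclideanSpace ℝ (Fin n)) {β : ℝ} (hβ : 0 ≤ β) :
    sphereProduct n N {θ | β + ∫ x, gphi (r * ⟪η, (x : EuclideanSpace ℝ (Fin n))⟫ + t)
        ∂uniformSphere n ≤ Ffun r t θ η} ≤ .ofReal (exp (-(2 * β ^ 2 * N))) := by
  simpa only [Fintype.card_fin, sub_zero, one_pow, div_one, sphereProduct, Ffun] using
    measure_pi_add_integral_le_average_le (ι := Fin N) (uniformSphere n) (by fun_prop)
      (fun x : sphere _ 1 ↦
        ⟨gphi_nonneg (r * ⟪η, (x : EuclideanSpace ℝ (Fin n))⟫ + t), gphi_le_one _⟩) hβ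

/-! ### The constants -/

theorem three_sub_div_two_le_inv_sqrt {x : ℝ} (hx : 0 < x) : (3 - x) / 2 ≤ (√x)⁻¹ := by
  have : 0 < √x := sqrt_pos.2 hx
  nth_rw 1 [← sq_sqrt hx.le]
  rw [div_le_iff₀ two_pos, ← sub_nonneg]
  have : (√x)⁻¹ * 2 - (3 - √x ^ 2) = (√x - 1) ^ 2 * (√x + 2) / √x := by
    field_simp
    ring
  rw [this]
  positivity

theorem exp_le_one_add_mul_exp (x : ℝ) : exp x ≤ 1 + x * exp x := by
  have := mul_le_mul_of_nonneg_right (add_one_le_exp (-x)) (exp_nonneg x)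
  rw [← exp_add, neg_add_cancel, exp_zero] at this
  linarith

theorem exp_nine_div_two_mul_le {n : ℕ} (hn : 3 ≤ n) :
    exp (9 / (2 * n)) ≤ 1 + 36 * (log n ^ 2 / n) := by
  have hn' : (3 : ℝ) ≤ n := by exact_mod_cast hn
  have exp_le_eight : exp (9 / (2 * n)) ≤ 8 := calc
    exp (9 / (2 * n)) ≤ exp 2 := by
      gcongr
      rw [div_le_iff₀ (by positivity)]
      linarith
    _ = exp 1 ^ 2 := by rw [← exp_nat_mul]; norm_num
    _ ≤ 2.8 ^ 2 := by gcongr; linarith [exp_one_lt_d9]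
    _ ≤ 8 := by norm_num
  have one_le_log : 1 ≤ log n :=
    (le_log_iff_exp_le (by positivity)).2 (by linarith [exp_one_lt_d9])
  calc
    exp (9 / (2 * n)) ≤ 1 + 9 / (2 * n) * exp (9 / (2 * n)) := exp_le_one_add_mul_exp _
    _ ≤ 1 + 9 / (2 * n) * 8 := by gcongr
    _ = 1 + 36 * (1 ^ 2 / n) := by ring
    _ ≤ 1 + 36 * (log n ^ 2 / n) := by gcongr

theorem one_sub_le_inv_sqrt_sq_add {s ρ a : ℝ} (ha : 0 < a) (hs : 0 ≤ s) (hρ : ρ ∈ Icc 0 1)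
    (hsρ : s ≤ 1 + ρ) : 1 - 2 * (ρ + a) ≤ (√(s ^ 2 + a))⁻¹ := by
  refine le_trans ?_ (three_sub_div_two_le_inv_sqrt (by positivity))
  have : s ^ 2 ≤ (1 + ρ) ^ 2 := by gcongr
  nlinarith [hρ.1, hρ.2]

theorem inv_sqrt_sq_add_le {s ρ a : ℝ} (ha : 0 ≤ a) (hρ : ρ ∈ Icc 0 (1 / 3))
    (hsρ : 1 - 2 * ρ ≤ s) : (√(s ^ 2 + a))⁻¹ ≤ 1 + 6 * ρ := by
  have hs : 0 < s := by linarith [hρ.2]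
  calc
    (√(s ^ 2 + a))⁻¹ ≤ s⁻¹ := by
      gcongr
      exact le_sqrt_of_sq_le (by linarith)
    _ ≤ 1 + 6 * ρ := by
      rw [inv_le_iff_one_le_mul₀' hs]
      nlinarith [hρ.1, hρ.2]

theorem exp_nine_div_mul_inv_sqrt_sq_add_le {n : ℕ} (hn : 3 ≤ n) {s ρ a : ℝ} (ha : 0 ≤ a)
    (hρ : ρ ∈ Icc 0 (1 / 3)) (hsρ : 1 - 2 * ρ ≤ s) :
    exp (9 / (2 * n)) * (√(s ^ 2 + a))⁻¹ ≤ 1 + 108 * (ρ + log n ^ 2 / n + a) := by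
  have : 0 ≤ log n ^ 2 / n := by positivity
  calc
    exp (9 / (2 * n)) * (√(s ^ 2 + a))⁻¹ ≤ (1 + 36 * (log n ^ 2 / n)) * (1 + 6 * ρ) := by
      gcongr
      · exact exp_nine_div_two_mul_le hn
      · exact inv_sqrt_sq_add_le ha hρ hsρ
    _ ≤ 1 + 108 * (ρ + log n ^ 2 / n + a) := by nlinarith [hρ.1, hρ.2]

theorem Ffun_pointwise_tail_bound_general :
    ∃ c C C' : ℝ, 0 < c ∧ 0 < C ∧ 0 < C' ∧
      ∀ n N : ℕ, 3 ≤ n → 0 < N → ∀ r : ℝ, 0 < r →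
        ∀ ρ : ℝ, ρ ∈ Ioo (0 : ℝ) (1 / 3) →
          ∀ η : EuclideanSpace ℝ (Fin n), ‖η‖ ≤ 1 + ρ → 1 - 2 * ρ < ‖η‖ →
            ∃ q : ℝ, 1 - C' * (ρ + n / r ^ 2) ≤ q ∧ ∀ t β : ℝ, 0 < β →
              sphereProduct n N
                  {θ | Ffun r t θ η >
                    β + (1 + c * (ρ + (log n) ^ 2 / n + n / r ^ 2)) *
                      (√n / r) * gphi (q * t * √n / r)} ≤
                ENNReal.ofReal (exp (-(C * β ^ 2 * N))) := by
  refine ⟨108, 2, 2, by norm_num, by norm_num, by norm_num,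
    fun n N hn hN r hr ρ hρ η hη_le hη_gt ↦ ?_⟩
  have : NeZero n := ⟨by lia⟩
  have : NeZero N := ⟨hN.ne'⟩
  have hn0 : (0 : ℝ) < n := by exact_mod_cast NeZero.pos n
  set q := (√(‖η‖ ^ 2 + n / r ^ 2))⁻¹ with hq
  refine ⟨q, one_sub_le_inv_sqrt_sq_add (by positivity) (norm_nonneg η)
    ⟨hρ.1.le, by linarith [hρ.2]⟩ hη_le, fun t β hβ ↦ ?_⟩
  have expectation_le : ∫ x, gphi (r * ⟪η, (x : EuclideanSpace ℝ (Fin n))⟫ + t) ∂uniformSphere n ≤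
      (1 + 108 * (ρ + log n ^ 2 / n + n / r ^ 2)) * (√n / r) * gphi (q * t * √n / r) := calc
    _ ≤ exp (9 / (2 * n)) * (q * (√n / r) * gphi (t * (q * (√n / r)))) := by
      rw [hq, ← inv_sqrt_one_add_mul_sq_div hn0 hr, ← div_eq_mul_inv]
      exact integral_gphi_uniformSphere_le hn η r t
    _ = exp (9 / (2 * n)) * q * (√n / r) * gphi (q * t * √n / r) := by ring_nf
    _ ≤ _ := by
      gcongr
      · exact gphi_nonneg _
      · exact exp_nine_div_mul_inv_sqrt_sq_add_le hn (by positivity) ⟨hρ.1.le, hρ.2.le⟩ hη_gt.le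
  refine (measure_mono fun θ hθ ↦ ?_).trans (sphereProduct_Ffun_le r t η hβ.le)
  rw [mem_ofPred_eq] at hθ ⊢
  linarith

end

/-- pointwise concentration bound for `F(η,t)` (Lemma 3.3 of the paper). -/
theorem Ffun_pointwise_tail_bound :
    ∃ c C C' : ℝ, 0 < c ∧ 0 < C ∧ 0 < C' ∧
      ∀ n N : ℕ, 4 ≤ n → n ≤ N → ∀ r : ℝ, Real.sqrt n ≤ r →
        ∀ ρ : ℝ, ρ ∈ Set.Ioo (0 : ℝ) (1 / 3) →
          ∀ η : EuclideanSpace ℝ (Fin n), ‖η‖ ≤ 1 + ρ → 1 - 2 * ρ < ‖η‖ →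
            ∀ t β : ℝ, 0 < β →
              ∃ q : ℝ, 1 - C' * (ρ + n / r ^ 2) ≤ q ∧
                sphereProduct n N
                    {θ | Ffun r t θ η >
                      β + (1 + c * (ρ + (Real.log n) ^ 2 / n + n / r ^ 2)) *
                        (Real.sqrt n / r) * gphi (q * t * Real.sqrt n / r)} ≤
                  ENNReal.ofReal (Real.exp (-(C * β ^ 2 * N))) := by
  obtain ⟨c, C, C', hc, hC, hC', tail_bound⟩ := Ffun_pointwise_tail_bound_general
  refine ⟨c, C, C', hc, hC, hC', fun n N hn hnN r hr ρ hρ η hη_le hη_gt t β hβ ↦ ?_⟩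
  have hr0 : 0 < r := (Real.sqrt_pos.2 (by exact_mod_cast (by lia : 0 < n))).trans_le hr
  exact (tail_bound n N (by lia) (by lia) r hr0 ρ hρ η hη_le hη_gt).imp
    fun q hq ↦ ⟨hq.1, hq.2 t β hβ⟩
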